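/- For vectors of indeterminates x = (x_1,...,x_k) and λ = (λ_1,...,λ_k), and positive integers n, k, the determinant of the matrix indexed by compositions α, β of n into k non-negative parts, with entry ∏_{i=1}^k binom(x_i+λ_i α_i+β_i, β_i), equals (∏_{j=1}^k λ_j)^{binom(n+k-1,k)} times the product over all non-negative integer vectors (ε_1,...,ε_k) with ε_1+···+ε_k < n of (n + Σ_{j=1}^k (x_j+1+ε_j)/λ_j), divided by ∏_{i=1}^n i^{binom(n+k-i-1,k-1)}. -/

import Mathlib

open Finset

/-- The polynomial binomial coefficient `y(y-1)⋯(y-m+1)/m!`. -/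
noncomputable def bch {F : Type*} [Field F] (y : F) (m : ℕ) : F :=
  (∏ j ∈ Finset.range m, (y - (j : F))) / (m.factorial : F)

/-- Compositions of `n` into `k` non-negative parts. -/
abbrev Comp (n k : ℕ) := {f : Fin k → Fin (n + 1) // ∑ i, (f i : ℕ) = n}

/-- Compositions of `n` into `k` strictly positive parts. -/
abbrev CompPos (n k : ℕ) :=
  {f : Fin k → Fin (n + 1) // (∑ i, (f i : ℕ)) = n ∧ ∀ i, 0 < (f i : ℕ)}


theorem det_tri {ι F : Type*} [Fintype ι] [DecidableEq ι] [Field F] (M : Matrix ι ι F) (b : ι → ℕ)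
    (h : ∀ i j, M i j ≠ 0 → i = j ∨ b i < b j) : M.det = ∏ i, M i i := by
  rw [Matrix.det_apply, Finset.sum_eq_single (1 : Equiv.Perm ι)]
  · simp
  · intro σ _ hσ
    have : ∃ i, M (σ i) i = 0 := by
      by_contra! hc
      apply hσ
      have h1 : ∀ i ∈ (univ : Finset ι), b (σ i) ≤ b i := by
        intro i _
        rcases h _ _ (hc i) with h | h
        · rw [h]
        · exact h.le
      have h2 : ∑ i, b (σ i) = ∑ i, b i := Equiv.sum_comp σ b
      have h3 := (Finset.sum_eq_sum_iff_of_le h1).1 h2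
      ext i
      rcases h _ _ (hc i) with h | h
      · exact h
      · exact absurd (h3 i (mem_univ i)) h.ne
    obtain ⟨i, hi⟩ := this
    rw [Finset.prod_eq_zero (f := fun i => M (σ i) i) (mem_univ i) hi, smul_zero]
  · simp

/-- natural-number valued parts -/
def cv {n k : ℕ} (β : Comp n k) : Fin k → ℕ := fun i => (β.1 i : ℕ)

theorem cv_sum {n k : ℕ} (β : Comp n k) : ∑ i, cv β i = n := β.2

theorem cv_inj {n k : ℕ} {β γ : Comp n k} (h : cv β = cv γ) : β = γ := by
  apply Subtype.ext
  funext i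
  exact Fin.ext (congrFun h i)

def mkC {n k : ℕ} (f : Fin k → ℕ) (h : ∑ i, f i = n) : Comp n k :=
  ⟨fun i => ⟨f i, Nat.lt_succ_of_le (h ▸ Finset.single_le_sum (fun _ _ => Nat.zero_le _) (mem_univ i))⟩, h⟩

theorem cv_mkC {n k : ℕ} (f : Fin k → ℕ) (h : ∑ i, f i = n) : cv (mkC f h) = f := rfl

theorem cv_le {n k : ℕ} (β : Comp n k) (i) : cv β i ≤ n := Nat.lt_succ_iff.1 (β.1 i).2

theorem sum_upd {k : ℕ} (f : Fin k → ℕ) (z : Fin k) (a : ℕ) :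
    ∑ i, Function.update f z a i + f z = ∑ i, f i + a := by
  rw [Finset.sum_update_of_mem (mem_univ z), ← Finset.add_sum_erase _ _ (mem_univ z), Finset.sdiff_singleton_eq_erase]
  ring

/-- vectors with small sum -/
def SS (n k : ℕ) : Finset (Fin k → ℕ) :=
  (Fintype.piFinset fun _ => Finset.range (n + 1)).filter (fun f => ∑ i, f i < n)

theorem mem_SS {n k : ℕ} (f : Fin k → ℕ) : f ∈ SS n k ↔ ∑ i, f i < n := by
  simp only [SS, mem_filter, Fintype.mem_piFinset, mem_range, and_iff_right_iff_imp]
  intro h i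
  have := Finset.single_le_sum (f := f) (fun _ _ => Nat.zero_le _) (mem_univ i)
  omega

theorem prod_fin_eq {n k : ℕ} {G : Type*} [CommMonoid G] (φ : (Fin k → ℕ) → G) :
    ∏ ε ∈ Finset.univ.filter (fun f : Fin k → Fin (n + 1) => ∑ i, (f i : ℕ) < n),
      φ (fun i => (ε i : ℕ)) = ∏ ε ∈ SS n k, φ ε := by
  refine Finset.prod_bij (fun ε _ => fun i => (ε i : ℕ)) ?_ ?_ ?_ ?_
  · intro a ha
    rw [mem_SS]
    exact (mem_filter.1 ha).2
  · intro a _ b _ h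
    funext i
    exact Fin.ext (congrFun h i)
  · intro b hb
    have hb' := (mem_SS b).1 hb
    refine ⟨fun i => ⟨b i, ?_⟩, ?_, rfl⟩
    · have := Finset.single_le_sum (f := b) (fun _ _ => Nat.zero_le _) (mem_univ i)
      omega
    · simpa using hb'
  · intros; rfl

theorem prod_chain {n k : ℕ} {G : Type*} [CommMonoid G] (z : Fin k) (φ : (Fin k → ℕ) → G) :
    ∏ s ∈ range n, ∏ β : Comp n k, (if cv β z ≤ s then 1 else
      φ (Function.update (cv β) z (cv β z - (s + 1)))) = ∏ ε ∈ SS n k, φ ε := by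
  rw [← Finset.prod_product']
  have : ∀ p : ℕ × Comp n k, (if cv p.2 z ≤ p.1 then 1 else
      φ (Function.update (cv p.2) z (cv p.2 z - (p.1 + 1)))) = (if ¬ cv p.2 z ≤ p.1 then 
      φ (Function.update (cv p.2) z (cv p.2 z - (p.1 + 1))) else 1) := by
    intro p; split_ifs <;> rfl
  simp only [this]
  rw [← Finset.prod_filter]
  refine Finset.prod_bij (fun p _ => Function.update (cv p.2) z (cv p.2 z - (p.1 + 1))) ?_ ?_ ?_ ?_
  · rintro ⟨s, β⟩ h
    simp only [mem_filter, mem_product, mem_range, mem_univ, and_true, not_le] at h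
    rw [mem_SS]
    have := sum_upd (cv β) z (cv β z - (s + 1))
    have := cv_sum β
    dsimp only
    omega
  · rintro ⟨s, β⟩ h ⟨t, γ⟩ h' e
    simp only [mem_filter, mem_product, mem_range, mem_univ, and_true, not_le] at h h'
    dsimp only at e
    have h1 := sum_upd (cv β) z (cv β z - (s + 1))
    have h2 := sum_upd (cv γ) z (cv γ z - (t + 1))
    have h3 := cv_sum β
    have h4 := cv_sum γ
    rw [e] at h1
    have h5 : s = t := by omega
    subst h5
    have h6 := congrFun e z
    simp only [Function.update_self] at h6
    have : β = γ := by
      apply cv_inj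
      funext i
      by_cases hi : i = z
      · subst hi; omega
      · have := congrFun e i
        simpa [hi] using this
    rw [this]
  · intro ε hε
    rw [mem_SS] at hε
    have h1 := sum_upd ε z (ε z + (n - ∑ i, ε i))
    refine ⟨(n - 1 - ∑ i, ε i, mkC (Function.update ε z (ε z + (n - ∑ i, ε i))) (by omega)), ?_, ?_⟩
    · simp only [mem_filter, mem_product, mem_range, mem_univ, and_true, not_le, cv_mkC, Function.update_self]
      omega
    · simp only [cv_mkC, Function.update_self, Function.update_idem]
      convert Function.update_eq_self z ε using 2
      omega
  · intros; rfl

theorem card_zero (k : ℕ) : (SS 0 k).card = 0 := by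
  rw [Finset.card_eq_zero]; ext f; simp [mem_SS]

theorem prod_SS_cons {n k : ℕ} {G : Type*} [CommMonoid G] (φ : ℕ → G) :
    ∏ ε ∈ SS n (k+1), φ (ε 0) = ∏ a ∈ range n, φ a ^ (SS (n - a) k).card := by
  have : ∀ a ∈ range n, φ a ^ (SS (n - a) k).card = ∏ f ∈ SS (n - a) k, φ a := by
    intro a _; rw [Finset.prod_const]
  rw [Finset.prod_congr rfl this, Finset.prod_sigma']
  refine Finset.prod_bij' (fun ε _ => ⟨ε 0, Fin.tail ε⟩) (fun p _ => Fin.cons p.1 p.2) ?_ ?_ ?_ ?_ ?_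
  · intro ε h
    rw [mem_SS, Fin.sum_univ_succ] at h
    simp only [mem_sigma, mem_range, mem_SS, Fin.tail]
    omega
  · rintro ⟨a, f⟩ h
    simp only [mem_sigma, mem_range, mem_SS] at h
    simp only [mem_SS, Fin.sum_univ_succ, Fin.cons_zero, Fin.cons_succ]
    omega
  · intro ε _; simp
  · rintro ⟨a, f⟩ _; simp
  · intros; rfl

theorem card_SS (n k : ℕ) : (SS (n+1) k).card = (n + k).choose k := by
  induction k generalizing n with
  | zero =>
    simp only [add_zero, Nat.choose_zero_right]
    rw [Finset.card_eq_one]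
    refine ⟨0, ?_⟩
    ext f; simp [mem_SS, eq_iff_true_of_subsingleton]
  | succ k ih =>
    have hrec : ∀ m : ℕ, (SS m (k+1)).card = ∑ a ∈ range m, (SS (m - a) k).card := by
      intro m
      have := prod_SS_cons (n := m) (k := k) (G := Multiplicative ℕ) (fun _ => Multiplicative.ofAdd 1)
      have h2 := congrArg Multiplicative.toAdd this
      simpa using h2
    induction n with
    | zero => rw [hrec]; simp [ih]
    | succ n ihn =>
      rw [hrec, Finset.sum_range_succ']
      simp only [Nat.add_sub_add_right, Nat.sub_zero]
      rw [← hrec, ihn, ih]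
      have := Nat.choose_succ_succ (n + 1 + k) k
      rw [show n + 1 + (k + 1) = (n + 1 + k).succ by omega, this,
        show n + (k + 1) = n + 1 + k by omega]
      exact Nat.add_comm _ _

section
variable {F : Type*} [Field F] [CharZero F]

theorem bch_zero' (y : F) : bch y 0 = 1 := by simp [bch]

theorem bch_step (y : F) (b : ℕ) :
    ((b : F) + 1) * bch (y + ((b + 1 : ℕ) : F)) (b + 1) = (y + b + 1) * bch (y + b) b := by
  unfold bch
  rw [Finset.prod_range_succ', Nat.factorial_succ]
  have h1 : ((b : F) + 1) ≠ 0 := by exact_mod_cast Nat.succ_ne_zero b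
  have h2 : ((b.factorial : ℕ) : F) ≠ 0 := by exact_mod_cast Nat.factorial_ne_zero b
  have : ∀ j ∈ range b, (y + ((b + 1 : ℕ) : F) - ((j + 1 : ℕ) : F)) = y + b - j := by
    intro j _; push_cast; ring
  rw [Finset.prod_congr rfl this]
  push_cast
  field_simp
  ring

theorem bch_expand (x l : F) (b : ℕ) : ∃ c : ℕ → F, c b = l ^ b ∧ (∀ g, b < g → c g = 0) ∧
    ∀ a : ℕ, bch (x + l * (a : F) + (b : F)) b = ∑ g ∈ range (b + 1), (a.choose g : F) * c g := by
  induction b with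
  | zero =>
    refine ⟨fun g => if g = 0 then 1 else 0, by simp, ?_, ?_⟩
    · intro g hg; simp; omega
    · intro a; simp [bch_zero']
  | succ b ih =>
    obtain ⟨c, hc, hz, h⟩ := ih
    have h1 : ((b : F) + 1) ≠ 0 := by exact_mod_cast Nat.succ_ne_zero b
    let d : ℕ → F := fun g => ((x + b + 1 + l * g) * c g + l * g * (if g = 0 then 0 else c (g - 1))) / (b + 1)
    refine ⟨d, ?_, ?_, ?_⟩
    · simp only [d, hz (b+1) (Nat.lt_succ_self b)]
      rw [if_neg (Nat.succ_ne_zero b), Nat.add_sub_cancel, hc]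
      push_cast
      field_simp
      ring
    · intro g hg
      simp only [d, hz g (by omega)]
      rw [if_neg (by omega), hz (g-1) (by omega)]
      simp
    · intro a
      apply mul_left_cancel₀ h1
      rw [bch_step, h a]
      have e1 : ∀ g : ℕ, (a : F) * (a.choose g : F) = (g + 1) * (a.choose (g + 1) : F) + g * (a.choose g : F) := by
        intro g
        have h0 := Nat.choose_succ_right_eq a g
        have : ((a.choose (g + 1) : ℕ) : F) * (g + 1) = (a.choose g : F) * ((a - g : ℕ) : F) := by
          exact_mod_cast h0
        by_cases hg : g ≤ a
        · rw [Nat.cast_sub hg] at this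
          linear_combination -this
        · rw [Nat.choose_eq_zero_of_lt (by omega), Nat.choose_eq_zero_of_lt (by omega)]; simp
      have e2 : ((b : F) + 1) * ∑ g ∈ range (b + 1 + 1), (a.choose g : F) * d g =
          ∑ g ∈ range (b + 2), (a.choose g : F) * ((x + b + 1 + l * g) * c g)
          + ∑ g ∈ range (b + 2), (a.choose g : F) * (l * g * (if g = 0 then 0 else c (g - 1))) := by
        rw [Finset.mul_sum, ← Finset.sum_add_distrib]
        refine Finset.sum_congr rfl fun g _ => ?_
        simp only [d]
        field_simp
      rw [e2, Finset.sum_range_succ _ (b+1), hz (b+1) (Nat.lt_succ_self b), Finset.sum_range_succ' _ (b+1),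
        Finset.mul_sum]
      simp only [Nat.cast_zero, mul_zero, zero_mul, add_zero]
      rw [← Finset.sum_add_distrib]
      refine Finset.sum_congr rfl fun g _ => ?_
      have := e1 g
      simp
      linear_combination (l * c g) * this

/-- entries -/
noncomputable def rr {k : ℕ} (x l : Fin k → F) (i : Fin k) (a b : ℕ) : F :=
  bch (x i + l i * (a : F) + (b : F)) b

noncomputable def fac {k : ℕ} (n : ℕ) (x l : Fin k → F) (ε : Fin k → ℕ) : F :=
  (n : F) + ∑ j, (x j + 1 + (ε j : F)) / l j

theorem key_rel {n k : ℕ} (x l : Fin k → F) (hl : ∀ j, l j ≠ 0) (α : Comp n k) (ε : Fin k → ℕ) :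
    fac n x l ε * ∏ i, rr x l i (cv α i) (ε i) =
      ∑ j, (ε j + 1 : F) / l j * ∏ i, rr x l i (cv α i) ((ε + Pi.single j 1 : Fin k → ℕ) i) := by
  have h : ∀ j, (ε j + 1 : F) / l j * ∏ i, rr x l i (cv α i) ((ε + Pi.single j 1 : Fin k → ℕ) i) =
      ((cv α j : F) + (x j + 1 + (ε j : F)) / l j) * ∏ i, rr x l i (cv α i) (ε i) := by
    intro j
    rw [← Finset.mul_prod_erase _ _ (mem_univ j), ← Finset.mul_prod_erase univ (fun i => rr x l i (cv α i) (ε i)) (mem_univ j)]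
    have : ∀ i ∈ univ.erase j, rr x l i (cv α i) ((ε + Pi.single j 1 : Fin k → ℕ) i) = rr x l i (cv α i) (ε i) := by
      intro i hi
      simp [(mem_erase.1 hi).1]
    rw [Finset.prod_congr rfl this]
    have h2 := bch_step (x j + l j * (cv α j : F)) (ε j)
    simp only [Pi.add_apply, Pi.single_eq_same, rr] at h2 ⊢
    have := hl j
    field_simp
    linear_combination (∏ i ∈ univ.erase j, bch (x i + l i * (cv α i : F) + (ε i : F)) (ε i)) * h2
  simp only [h]
  rw [← Finset.sum_mul, Finset.sum_add_distrib]
  congr 1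
  rw [fac]
  congr 1
  have := cv_sum α
  exact_mod_cast this.symm

noncomputable def MM {k : ℕ} (n : ℕ) (x l : Fin k → F) (z : Fin k) (s : ℕ) : Matrix (Comp n k) (Comp n k) F :=
  Matrix.of fun α β => ∏ i, rr x l i (cv α i) (Function.update (cv β) z (cv β z - s) i)

theorem upd_eq {k : ℕ} (f : Fin k → ℕ) (z j : Fin k) (s : ℕ) (h : s < f z) (g : Fin k → ℕ)
    (hg : g = Function.update f z (f z - 1) + Pi.single j 1) :
    Function.update g z (g z - s) = Function.update f z (f z - (s + 1)) + Pi.single j 1 := by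
  subst hg
  funext i
  by_cases hi : i = z
  · subst hi
    by_cases hj : i = j
    · subst hj; simp; omega
    · simp [hj]; omega
  · simp [hi]

theorem MM_step {n k : ℕ} (x l : Fin k → F) (hl : ∀ j, l j ≠ 0) (z : Fin k) (s : ℕ) :
    (MM n x l z (s + 1)).det * (∏ β : Comp n k, if cv β z ≤ s then 1 else
        fac n x l (Function.update (cv β) z (cv β z - (s + 1)))) =
    (MM n x l z s).det * (∏ β : Comp n k, if cv β z ≤ s then 1 else
        (((Function.update (cv β) z (cv β z - (s + 1)) z : ℕ) : F) + 1) / l z) := by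
  classical
  let T : Matrix (Comp n k) (Comp n k) F := Matrix.of fun γ β =>
    if cv β z ≤ s then (if γ = β then 1 else 0) else
      ∑ j, if cv γ = Function.update (cv β) z (cv β z - 1) + Pi.single j 1 then
        (((Function.update (cv β) z (cv β z - (s + 1)) j : ℕ) : F) + 1) / l j else 0
  have hself : ∀ (β : Comp n k) (j : Fin k), s < cv β z →
      (cv β = Function.update (cv β) z (cv β z - 1) + Pi.single j 1 ↔ j = z) := by
    intro β j h
    constructor
    · intro e
      by_contra hj
      have := congrFun e z
      simp [Ne.symm hj] at this
      omega
    · rintro rfl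
      funext i
      by_cases hi : i = j
      · subst hi; simp; omega
      · simp [hi]
  have hT : T.det = ∏ β : Comp n k, if cv β z ≤ s then 1 else
        (((Function.update (cv β) z (cv β z - (s + 1)) z : ℕ) : F) + 1) / l z := by
    rw [det_tri T (fun β => cv β z)]
    · refine Finset.prod_congr rfl fun β _ => ?_
      simp only [T, Matrix.of_apply, if_true]
      split_ifs with h
      · rfl
      · simp only [hself β _ (not_le.1 h)]
        simp
    · intro γ β h
      simp only [T, Matrix.of_apply] at h
      split_ifs at h with h1 h2
      · exact Or.inl h2
      · exact absurd rfl h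
      · obtain ⟨j, _, hj⟩ := Finset.exists_ne_zero_of_sum_ne_zero h
        have hj' : cv γ = Function.update (cv β) z (cv β z - 1) + Pi.single j 1 := by
          by_contra hc
          rw [if_neg hc] at hj
          exact hj rfl
        by_cases hjz : j = z
        · left
          apply cv_inj
          rw [hj']
          exact ((hself β j (not_le.1 h1)).2 hjz).symm
        · right
          rw [hj']
          simp [Ne.symm hjz]
          omega
  rw [← hT, ← Matrix.det_diagonal, ← Matrix.det_mul, ← Matrix.det_mul]
  congr 1
  ext α β
  rw [Matrix.mul_diagonal, Matrix.mul_apply]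
  simp only [T, Matrix.of_apply, MM]
  split_ifs with h
  · simp only [mul_ite, mul_one, mul_zero, Finset.sum_ite_eq', mem_univ, if_true]
    rw [show cv β z - (s+1) = 0 by omega, show cv β z - s = 0 by omega]
  · rw [mul_comm, key_rel x l hl]
    simp only [Finset.mul_sum]
    rw [Finset.sum_comm]
    refine Finset.sum_congr rfl fun j _ => ?_
    have hs : ∑ i, (Function.update (cv β) z (cv β z - 1) + Pi.single j 1 : Fin k → ℕ) i = n := by
      have := sum_upd (cv β) z (cv β z - 1)
      have := cv_sum β
      simp only [Pi.add_apply, Finset.sum_add_distrib, Finset.sum_pi_single', mem_univ, if_true]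
      omega
    rw [Finset.sum_eq_single (mkC _ hs)]
    · rw [if_pos (cv_mkC _ _), mul_comm]
      congr 1
      refine Finset.prod_congr rfl fun i _ => ?_
      congr 1
      exact (congrFun (upd_eq (cv β) z j s (not_le.1 h) _ (cv_mkC _ hs)) i).symm
    · intro γ _ hγ
      rw [if_neg, mul_zero]
      intro hc
      exact hγ (cv_inj hc)
    · simp

theorem MM_last {n k : ℕ} (x l : Fin k → F) (z : Fin k) :
    (MM n x l z n).det = ∏ β : Comp n k, ∏ i ∈ univ.erase z, l i ^ cv β i := by
  classical
  choose c hc hz h using fun i b => bch_expand (x i) (l i) b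
  let A : Matrix (Comp n k) (Comp n k) F := Matrix.of fun α γ =>
    ∏ i ∈ univ.erase z, ((cv α i).choose (cv γ i) : F)
  let C : Matrix (Comp n k) (Comp n k) F := Matrix.of fun γ β =>
    ∏ i ∈ univ.erase z, c i (cv β i) (cv γ i)
  have tri : ∀ γ β : Comp n k, (∀ i ∈ univ.erase z, cv γ i ≤ cv β i) → γ = β ∨ cv β z < cv γ z := by
    intro γ β hle
    have h1 := cv_sum γ
    have h2 := cv_sum β
    rw [← Finset.add_sum_erase _ _ (mem_univ z)] at h1 h2
    have h3 := Finset.sum_le_sum hle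
    by_cases h4 : cv β z < cv γ z
    · exact Or.inr h4
    · left
      have h5 : ∑ i ∈ univ.erase z, cv γ i = ∑ i ∈ univ.erase z, cv β i := by omega
      have h6 := (Finset.sum_eq_sum_iff_of_le hle).1 h5
      apply cv_inj
      funext i
      by_cases hi : i = z
      · subst hi; omega
      · exact h6 i (by simp [hi])
  have hA : A.det = 1 := by
    rw [det_tri A (fun β => cv β z)]
    · simp [A]
    · intro α γ hne
      simp only [A, Matrix.of_apply] at hne
      rw [Finset.prod_ne_zero_iff] at hne
      have := tri γ α (fun i hi => by
        by_contra hlt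
        apply hne i hi
        rw [Nat.choose_eq_zero_of_lt (not_le.1 hlt), Nat.cast_zero])
      rcases this with h | h
      · exact Or.inl h.symm
      · exact Or.inr h
  have hC : C.det = ∏ β : Comp n k, ∏ i ∈ univ.erase z, l i ^ cv β i := by
    rw [← Matrix.det_transpose, det_tri C.transpose (fun β => cv β z)]
    · simp [C, hc]
    · intro β γ hne
      simp only [C, Matrix.of_apply, Matrix.transpose_apply] at hne
      rw [Finset.prod_ne_zero_iff] at hne
      have := tri γ β (fun i hi => by
        by_contra hlt
        exact hne i hi (hz _ _ _ (not_le.1 hlt)))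
      rcases this with h | h
      · exact Or.inl h.symm
      · exact Or.inr h
  rw [← hC, ← one_mul C.det, ← hA, ← Matrix.det_mul]
  congr 1
  ext α β
  rw [Matrix.mul_apply]
  simp only [MM, A, C, Matrix.of_apply]
  rw [← Finset.mul_prod_erase _ _ (mem_univ z)]
  have e0 : rr x l z (cv α z) (Function.update (cv β) z (cv β z - n) z) = 1 := by
    rw [Function.update_self, Nat.sub_eq_zero_of_le (cv_le β z), rr, bch_zero']
  rw [e0, one_mul]
  have e1 : ∀ i ∈ univ.erase z, rr x l i (cv α i) (Function.update (cv β) z (cv β z - n) i) =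
      ∑ g ∈ range (cv β i + 1), ((cv α i).choose g : F) * c i (cv β i) g := by
    intro i hi
    rw [Function.update_of_ne (mem_erase.1 hi).1, rr, h]
  rw [Finset.prod_congr rfl e1]
  let D : Fin k → ℕ → F := fun i g => if i = z then 1 else ((cv α i).choose g : F) * c i (cv β i) g
  let R : Fin k → Finset ℕ := fun i => if i = z then {0} else range (cv β i + 1)
  have e2 : ∏ i ∈ univ.erase z, ∑ g ∈ range (cv β i + 1), ((cv α i).choose g : F) * c i (cv β i) g
      = ∏ i, ∑ g ∈ R i, D i g := by
    rw [← Finset.mul_prod_erase univ _ (mem_univ z)]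
    simp only [R, D, if_true, Finset.sum_singleton, one_mul]
    refine Finset.prod_congr rfl fun i hi => ?_
    simp [(mem_erase.1 hi).1]
  rw [e2, Finset.prod_univ_sum]
  symm
  have e3 : ∀ p : Fin k → ℕ, ∏ i, D i (p i) =
      ∏ i ∈ univ.erase z, ((cv α i).choose (p i) : F) * c i (cv β i) (p i) := by
    intro p
    rw [← Finset.mul_prod_erase univ _ (mem_univ z)]
    simp only [D, if_true, one_mul]
    refine Finset.prod_congr rfl fun i hi => ?_
    simp [(mem_erase.1 hi).1]
  simp only [e3, ← Finset.prod_mul_distrib]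
  have hpos : ∀ γ : Comp n k, ∏ i ∈ univ.erase z, ((cv α i).choose (cv γ i) : F) * c i (cv β i) (cv γ i) ≠ 0 →
      ∀ i ∈ univ.erase z, cv γ i ≤ cv β i := by
    intro γ hne i hi
    rw [Finset.prod_ne_zero_iff] at hne
    by_contra hlt
    apply hne i hi
    rw [hz _ _ _ (not_le.1 hlt), mul_zero]
  refine Finset.sum_bij_ne_zero (fun γ _ _ => Function.update (cv γ) z 0) ?_ ?_ ?_ ?_
  · intro γ _ hne
    rw [Fintype.mem_piFinset]
    intro i
    by_cases hi : i = z
    · subst hi; simp [R]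
    · have := hpos γ hne i (by simp [hi])
      simp [R, hi]; omega
  · intro γ _ _ δ _ _ e
    have h1 := sum_upd (cv γ) z 0
    have h2 := sum_upd (cv δ) z 0
    have h3 := cv_sum γ
    have h4 := cv_sum δ
    rw [e] at h1
    apply cv_inj
    funext i
    by_cases hi : i = z
    · subst hi; omega
    · have := congrFun e i
      simpa [hi] using this
  · intro p hp hne
    rw [Fintype.mem_piFinset] at hp
    have hp0 : p z = 0 := by simpa [R] using hp z
    have hp1 : ∀ i, i ≠ z → p i ≤ cv β i := by
      intro i hi
      have := hp i
      simp [R, hi] at this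
      omega
    have hle : ∑ i, p i ≤ n := by
      rw [← cv_sum β]
      refine Finset.sum_le_sum fun i _ => ?_
      by_cases hi : i = z
      · subst hi; omega
      · exact hp1 i hi
    have h1 := sum_upd p z (n - ∑ i, p i)
    have h2 : ∑ i, Function.update p z (n - ∑ i, p i) i = n := by omega
    refine ⟨mkC _ h2, mem_univ _, ?_, ?_⟩
    · convert hne using 1
      refine Finset.prod_congr rfl fun i hi => ?_
      rw [cv_mkC, Function.update_of_ne (mem_erase.1 hi).1]
    · rw [cv_mkC, Function.update_idem, ← hp0, Function.update_eq_self]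
  · intro γ _ _
    refine Finset.prod_congr rfl fun i hi => ?_
    rw [Function.update_of_ne (mem_erase.1 hi).1]

theorem MM_chain {n k : ℕ} (x l : Fin k → F) (hl : ∀ j, l j ≠ 0) (z : Fin k) (m : ℕ) :
    (MM n x l z m).det * (∏ s ∈ range m, ∏ β : Comp n k, if cv β z ≤ s then 1 else
        fac n x l (Function.update (cv β) z (cv β z - (s + 1)))) =
    (MM n x l z 0).det * (∏ s ∈ range m, ∏ β : Comp n k, if cv β z ≤ s then 1 else
        (((Function.update (cv β) z (cv β z - (s + 1)) z : ℕ) : F) + 1) / l z) := by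
  induction m with
  | zero => simp
  | succ m ih =>
    rw [Finset.prod_range_succ, Finset.prod_range_succ, ← mul_assoc, ← mul_assoc, ← ih,
      mul_right_comm, MM_step x l hl, mul_right_comm]

theorem prod_pow_cv {n k : ℕ} (z : Fin k) (a : F) :
    ∏ β : Comp n k, a ^ cv β z = a ^ (SS n k).card := by
  rw [← Finset.prod_const, ← prod_chain z, Finset.prod_comm]
  refine Finset.prod_congr rfl fun β _ => ?_
  have : ∀ s, (if cv β z ≤ s then 1 else a) = if s < cv β z then a else 1 := by
    intro s; split_ifs <;> first | rfl | omega
  simp only [this]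
  rw [← Finset.prod_filter, Finset.prod_const]
  congr 1
  have : (range n).filter (fun s => s < cv β z) = range (cv β z) := by
    ext s; have := cv_le β z; simp; omega
  rw [this, card_range]

end

theorem stmt7 {F : Type*} [Field F] [CharZero F] (n k : ℕ) (hn : 0 < n) (hk : 0 < k)
    (x l : Fin k → F) (hl : ∀ j, l j ≠ 0) :
    Matrix.det (Matrix.of fun α β : Comp n k =>
        ∏ i, bch (x i + l i * ((α.1 i : ℕ) : F) + ((β.1 i : ℕ) : F)) ((β.1 i : ℕ))) =
      (∏ j, l j) ^ ((n + k - 1).choose k) *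
        (∏ ε ∈ Finset.univ.filter (fun f : Fin k → Fin (n + 1) => ∑ i, (f i : ℕ) < n),
          ((n : F) + ∑ j, (x j + 1 + ((ε j : ℕ) : F)) / l j)) /
        ∏ i ∈ Finset.Icc 1 n, (i : F) ^ ((n + k - i - 1).choose (k - 1)) := by
  obtain ⟨K, rfl⟩ : ∃ K, k = K + 1 := ⟨k - 1, by omega⟩
  obtain ⟨N, rfl⟩ : ∃ N, n = N + 1 := ⟨n - 1, by omega⟩
  have h0 : Matrix.det (Matrix.of fun α β : Comp (N+1) (K+1) =>
        ∏ i, bch (x i + l i * ((α.1 i : ℕ) : F) + ((β.1 i : ℕ) : F)) ((β.1 i : ℕ))) =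
      (MM (N+1) x l 0 0).det := by
    congr 1
    ext α β
    simp only [MM, Matrix.of_apply, Nat.sub_zero, Function.update_eq_self]
    rfl
  have h1 : (∏ ε ∈ Finset.univ.filter (fun f : Fin (K+1) → Fin (N + 1 + 1) => ∑ i, (f i : ℕ) < N + 1),
          (((N + 1 : ℕ) : F) + ∑ j, (x j + 1 + ((ε j : ℕ) : F)) / l j)) =
      ∏ ε ∈ SS (N+1) (K+1), fac (N+1) x l ε :=
    prod_fin_eq (fun ε => fac (N+1) x l ε)
  rw [h0, h1]
  have h2 := MM_chain (n := N+1) x l hl 0 (N+1)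
  rw [prod_chain 0 (fun ε => fac (N+1) x l ε),
    prod_chain 0 (fun ε => ((ε 0 : ℕ) + 1 : F) / l 0), MM_last, Finset.prod_div_distrib,
    Finset.prod_const, prod_SS_cons (fun a => ((a : ℕ) + 1 : F)), Finset.prod_comm] at h2
  simp only [prod_pow_cv] at h2
  rw [Finset.prod_pow, card_SS] at h2
  have h3 : ∏ i ∈ Finset.Icc 1 (N+1), (i : F) ^ ((N + 1 + (K + 1) - i - 1).choose (K + 1 - 1)) =
      ∏ a ∈ range (N+1), ((a : F) + 1) ^ (SS (N + 1 - a) K).card := by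
    have e := Finset.prod_Ico_add' (fun i : ℕ => (i : F) ^ ((N + 1 + (K + 1) - i - 1).choose (K + 1 - 1))) 0 (N+1) 1
    have e' : Finset.Icc 1 (N+1) = Finset.Ico (0 + 1) (N + 1 + 1) := by
      ext i; simp only [Finset.mem_Icc, Finset.mem_Ico]; omega
    rw [e', ← e, Finset.range_eq_Ico]
    refine Finset.prod_congr rfl fun a ha => ?_
    have ha' : a < N + 1 := (Finset.mem_Ico.1 ha).2
    rw [show N + 1 - a = (N - a) + 1 by omega, card_SS,
      show N + 1 + (K + 1) - (a + 1) - 1 = N - a + K by omega, Nat.add_sub_cancel]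
    push_cast
    rfl
  rw [h3, show N + 1 + (K + 1) - 1 = N + (K + 1) by omega]
  have h4 : ∏ a ∈ range (N+1), ((a : F) + 1) ^ (SS (N + 1 - a) K).card ≠ 0 :=
    Finset.prod_ne_zero_iff.2 fun a _ => pow_ne_zero _ (by exact_mod_cast Nat.succ_ne_zero a)
  have h5 : l 0 ^ (N + (K + 1)).choose (K + 1) ≠ 0 := pow_ne_zero _ (hl 0)
  rw [eq_div_iff h4, ← Finset.mul_prod_erase univ _ (mem_univ (0 : Fin (K+1))), mul_pow]
  rw [mul_div_assoc', eq_div_iff h5] at h2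
  linear_combination -h2
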